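/- arXiv:2512.15189 — 2 statements merged into one kernel-verified Lean document; each statement's English description precedes it below -/
import Mathlib

section
/- (Per-iteration contraction of asynchronous DPBM.) Let ι be a finite nonempty index type with a distinguished element i₀, and let ŵ : ι → ℝ satisfy ŵ_j ≥ 0 for all j and Σ_j ŵ_j = 1. Let γ > 0 and β ≥ 0 with γ·β ≤ ŵ_{i₀}. Let f, h, m : ℝ^d → ℝ with m and h convex, set φ := f + h, fix x̄ ∈ ℝ^d, and assume the sandwich bounds m(y) ≤ f(y) ≤ m(y) + (β/2)‖y − x̄‖² for all y. Let z : ι → ℝ^d with z_{i₀} = x̄, and let x* : ι → ℝ^d. Suppose x⁺, g⁺ ∈ ℝ^d satisfy: g⁺ is a subgradient of m + h at x⁺ and x⁺ = Σ_j ŵ_j z_j − γ g⁺. Suppose g* ∈ ℝ^d is a subgradient of φ at x*_{i₀} and x*_{i₀} = Σ_j ŵ_j x*_j − γ g*. Then ‖x⁺ − x*_{i₀}‖² ≤ Σ_j ŵ_j ‖z_j − x*_j‖² − 2γ( φ(x⁺) − φ(x*_{i₀}) − ⟪g*, x⁺ − x*_{i₀}⟫ ). -/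
open scoped RealInnerProductSpace

/-- Per-iteration contraction of asynchronous DPBM. -/
theorem stmt_4 {d : ℕ} (hd : 1 ≤ d)
    {ι : Type*} [Fintype ι] [Nonempty ι] (i₀ : ι)
    (w : ι → ℝ) (hw : ∀ j, 0 ≤ w j) (hw1 : ∑ j, w j = 1)
    (γ β : ℝ) (hγ : 0 < γ) (hβ : 0 ≤ β) (hγβ : γ * β ≤ w i₀)
    (f h m : EuclideanSpace ℝ (Fin d) → ℝ)
    (hmconv : ConvexOn ℝ Set.univ m) (hhconv : ConvexOn ℝ Set.univ h)
    (φ : EuclideanSpace ℝ (Fin d) → ℝ) (hφ : ∀ y, φ y = f y + h y)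
    (xb : EuclideanSpace ℝ (Fin d))
    (hsand₁ : ∀ y, m y ≤ f y)
    (hsand₂ : ∀ y, f y ≤ m y + β / 2 * ‖y - xb‖ ^ 2)
    (z : ι → EuclideanSpace ℝ (Fin d)) (hz : z i₀ = xb)
    (xstar : ι → EuclideanSpace ℝ (Fin d))
    (xp gp : EuclideanSpace ℝ (Fin d))
    (hgp : ∀ y, m y + h y ≥ m xp + h xp + ⟪gp, y - xp⟫)
    (hxp : xp = ∑ j, w j • z j - γ • gp)
    (gs : EuclideanSpace ℝ (Fin d))
    (hgs : ∀ y, φ y ≥ φ (xstar i₀) + ⟪gs, y - xstar i₀⟫)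
    (hxs : xstar i₀ = ∑ j, w j • xstar j - γ • gs) :
    ‖xp - xstar i₀‖ ^ 2 ≤ ∑ j, w j * ‖z j - xstar j‖ ^ 2
      - 2 * γ * (φ xp - φ (xstar i₀) - ⟪gs, xp - xstar i₀⟫) := by
  obtain ⟨D, hD⟩ : ∃ D, D = xp - xstar i₀ := ⟨_, rfl⟩
  have hsum : ∑ j, w j * ‖(z j - xstar j) - D‖ ^ 2
      = ∑ j, w j * ‖z j - xstar j‖ ^ 2 - 2 * ⟪∑ j, w j • (z j - xstar j), D⟫ + ‖D‖ ^ 2 := by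
    have h1 : ‖D‖ ^ 2 = ∑ j, w j * ‖D‖ ^ 2 := by
      rw [← Finset.sum_mul, hw1, one_mul]
    rw [h1, sum_inner, Finset.mul_sum, ← Finset.sum_sub_distrib, ← Finset.sum_add_distrib]
    refine Finset.sum_congr rfl fun j _ => ?_
    rw [norm_sub_sq_real, real_inner_smul_left]
    ring
  have hone : w i₀ * ‖xp - xb‖ ^ 2 ≤ ∑ j, w j * ‖(z j - xstar j) - D‖ ^ 2 := by
    have h2 : ‖xp - xb‖ = ‖(z i₀ - xstar i₀) - D‖ := by
      rw [hz, hD, norm_sub_rev]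
      congr 1
      abel
    rw [h2]
    exact Finset.single_le_sum (f := fun j => w j * ‖(z j - xstar j) - D‖ ^ 2)
      (fun j _ => mul_nonneg (hw j) (sq_nonneg _)) (Finset.mem_univ i₀)
  have hu : ∑ j, w j • (z j - xstar j) = D + γ • (gp - gs) := by
    simp only [smul_sub, Finset.sum_sub_distrib]
    have e1 : ∑ j, w j • z j = xp + γ • gp := by
      rw [eq_sub_iff_add_eq] at hxp; exact hxp.symm
    have e2 : ∑ j, w j • xstar j = xstar i₀ + γ • gs := by
      rw [eq_sub_iff_add_eq] at hxs; exact hxs.symm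
    rw [e1, e2, hD]
    abel
  have hin : ⟪∑ j, w j • (z j - xstar j), D⟫ = ‖D‖ ^ 2 + γ * (⟪gp, D⟫ - ⟪gs, D⟫) := by
    rw [hu, inner_add_left, real_inner_smul_left, inner_sub_left, real_inner_self_eq_norm_sq]
  have hg := hgp (xstar i₀)
  have hneg : ⟪gp, xstar i₀ - xp⟫ = -⟪gp, D⟫ := by
    rw [hD, ← inner_neg_right, neg_sub]
  rw [hneg] at hg
  have hA : φ xp - φ (xstar i₀) - ⟪gs, D⟫
      ≤ ⟪gp, D⟫ - ⟪gs, D⟫ + β / 2 * ‖xp - xb‖ ^ 2 := by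
    rw [hφ, hφ]
    linarith [hsand₁ (xstar i₀), hsand₂ xp]
  have hB := mul_le_mul_of_nonneg_left hA hγ.le
  have hC := mul_le_mul_of_nonneg_right hγβ (sq_nonneg ‖xp - xb‖)
  rw [← hD]
  rw [hsum, hin] at hone
  nlinarith
end

section
/- (Theorem 1, part 1, convergence without strong convexity.) Consider the asynchronous DPBM setup under partial asynchrony with parameters B, D ∈ ℕ. Then the joint iterate sequence (x_1^k, …, x_n^k) converges, as k → ∞, to a point x̃ ∈ (ℝ^d)^n that is a global minimizer of the penalized objective Φ. -/
open scoped RealInnerProductSpace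

theorem aux_limit0 (A C : ℝ) (h : ∀ t : ℝ, 0 < t → t ≤ 1 → 0 ≤ A + t * C) : 0 ≤ A := by
  by_contra hA
  push Not at hA
  have hC : 0 < |C| + 1 := by positivity
  have h1 := h (min 1 (-A / (2 * (|C| + 1)))) (lt_min one_pos (by apply div_pos <;> linarith))
    (min_le_left _ _)
  have h2 : min 1 (-A / (2 * (|C| + 1))) ≤ -A / (2 * (|C| + 1)) := min_le_right _ _
  have h0 : 0 ≤ min 1 (-A / (2 * (|C| + 1))) := le_min zero_le_one (by apply div_nonneg <;> linarith)
  rw [le_div_iff₀ (by positivity)] at h2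
  have h3 := mul_le_mul_of_nonneg_left (le_abs_self C) h0
  nlinarith

theorem aux_window {ι : Type*} [Fintype ι] (u : ℕ → ι → ℝ) (K : ι → Set ℕ)
    (s : ι → ι → ℕ → ℕ) (c : ι → ℝ) (a : ι → ι → ℝ) (hc : ∀ i, 0 < c i) (ha : ∀ i j, 0 ≤ a i j)
    (hsum : ∀ i, c i + ∑ j, a i j = 1)
    (hsle : ∀ i j, ∀ k ∈ K i, s i j k ≤ k)
    (hup : ∀ i, ∀ k ∈ K i, u (k + 1) i ≤ c i * u k i + ∑ j, a i j * u (s i j k) j)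
    (hno : ∀ i, ∀ k, k ∉ K i → u (k + 1) i = u k i)
    (D : ℕ) (hD : ∀ i j, ∀ k ∈ K i, k - D ≤ s i j k)
    (k : ℕ) (M : ℝ) (hw : ∀ l, k ≤ l → l ≤ k + D → ∀ i, u l i ≤ M) :
    ∀ l, k ≤ l → ∀ i, u l i ≤ M := by
  intro l
  induction l using Nat.strong_induction_on with
  | _ l ih =>
    intro hl i
    by_cases h1 : l ≤ k + D
    · exact hw l hl h1 i
    obtain ⟨t, rfl⟩ : ∃ t, l = t + 1 := ⟨l - 1, by omega⟩
    have ht := ih t (by omega) (by omega)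
    by_cases hK : t ∈ K i
    · refine (hup i t hK).trans ?_
      have e1 : ∑ j, a i j * u (s i j t) j ≤ ∑ j, a i j * M := by
        refine Finset.sum_le_sum fun j _ => mul_le_mul_of_nonneg_left ?_ (ha i j)
        have := hD i j t hK
        have := hsle i j t hK
        exact ih _ (by omega) (by omega) j
      rw [← Finset.sum_mul] at e1
      have e2 := mul_le_mul_of_nonneg_left (ht i) (hc i).le
      have e3 : c i * M + (∑ j, a i j) * M = M := by rw [← add_mul, hsum, one_mul]
      linarith
    · rw [hno i t hK]; exact ht i

theorem aux_spread {ι : Type*} [Fintype ι] (u : ℕ → ι → ℝ) (K : ι → Set ℕ)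
    (s : ι → ι → ℕ → ℕ) (c : ι → ℝ) (a : ι → ι → ℝ) (ha : ∀ i j, 0 ≤ a i j)
    (hsum : ∀ i, c i + ∑ j, a i j = 1)
    (hsle : ∀ i j, ∀ k ∈ K i, s i j k ≤ k)
    (hup : ∀ i, ∀ k ∈ K i, u (k + 1) i ≤ c i * u k i + ∑ j, a i j * u (s i j k) j)
    (hno : ∀ i, ∀ k, k ∉ K i → u (k + 1) i = u k i)
    (B D : ℕ) (hB : ∀ i, ∀ k : ℕ, ∃ l ∈ K i, k ≤ l ∧ l ≤ k + B)
    (hD : ∀ i j, ∀ k ∈ K i, k - D ≤ s i j k)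
    (ρ : ℝ) (hρ : 0 < ρ) (hρ1 : ρ ≤ 1) (hρc : ∀ i, ρ ≤ c i) (i0 j : ι)
    (hconn : Relation.ReflTransGen (fun i j => 0 < a j i) i0 j) :
    ∃ C : ℝ, 0 < C ∧ ∃ N : ℕ, ∀ k M, D ≤ k → (∀ l, k - D ≤ l → ∀ i, u l i ≤ M) →
      ∀ r, N ≤ r → u (k + r) j ≤ M - C * ρ ^ r * (M - u k i0) := by
  -- one step: persistence
  have pers : ∀ k M, D ≤ k → (∀ l, k - D ≤ l → ∀ i, u l i ≤ M) → ∀ p t, k ≤ t → ∀ η, 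
      u t p ≤ M - η → ∀ q, 0 ≤ η → u (t + q) p ≤ M - ρ ^ q * η := by
    intro k M hk hM p t ht η hη q hη0
    induction q with
    | zero => simpa using hη
    | succ q ih =>
      rw [← add_assoc]
      have hpw : 0 ≤ ρ ^ q * η := by positivity
      by_cases hK : t + q ∈ K p
      · refine (hup p _ hK).trans ?_
        have e1 : ∑ j, a p j * u (s p j (t + q)) j ≤ ∑ j, a p j * M := by
          refine Finset.sum_le_sum fun j _ => mul_le_mul_of_nonneg_left ?_ (ha p j)
          have := hD p j _ hK
          exact hM _ (by omega) j
        rw [← Finset.sum_mul] at e1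
        have e2 := mul_le_mul_of_nonneg_left ih (hρ.le.trans (hρc p))
        have e3 : c p * M + (∑ j, a p j) * M = M := by rw [← add_mul, hsum, one_mul]
        have e4 := mul_le_mul_of_nonneg_right (hρc p) hpw
        rw [pow_succ]; linarith
      · rw [hno p _ hK, pow_succ]
        have e4 := mul_le_mul_of_nonneg_right hρ1 hpw
        linarith
  induction hconn with
  | refl =>
    refine ⟨1, one_pos, 0, fun k M hk hM r _ => ?_⟩
    have := pers k M hk hM i0 k le_rfl (M - u k i0) (by linarith) r
      (by linarith [hM k (by omega) i0])
    linarith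
  | @tail j p _ hjp ih =>
    obtain ⟨C, hC, N, h⟩ := ih
    refine ⟨a p j * C, by positivity, N + D + B + 1, fun k M hk hM r hr => ?_⟩
    obtain ⟨t, htK, ht1, ht2⟩ := hB p (k + N + D)
    have hs1 := hD p j t htK
    have hs2 := hsle p j t htK
    have hε : 0 ≤ M - u k i0 := by linarith [hM k (by omega) i0]
    have hj := h k M hk hM (s p j t - k) (by omega)
    rw [show k + (s p j t - k) = s p j t by omega] at hj
    have hpow : ρ ^ (t - k) ≤ ρ ^ (s p j t - k) := pow_le_pow_of_le_one hρ.le hρ1 (by omega)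
    have hj' : u (s p j t) j ≤ M - C * ρ ^ (t - k) * (M - u k i0) := by
      have := mul_le_mul_of_nonneg_right (mul_le_mul_of_nonneg_left hpow hC.le) hε
      linarith
    have hfirst : u (t + 1) p ≤ M - a p j * (C * ρ ^ (t - k) * (M - u k i0)) := by
      refine (hup p _ htK).trans ?_
      have e1 : ∑ j', a p j' * u (s p j' t) j' ≤
          ∑ j', a p j' * M - a p j * (C * ρ ^ (t - k) * (M - u k i0)) := by
        classical
        rw [← Finset.add_sum_erase _ _ (Finset.mem_univ j),
          ← Finset.add_sum_erase _ (fun j' => a p j' * M) (Finset.mem_univ j)]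
        have e0 : ∑ j' ∈ Finset.univ.erase j, a p j' * u (s p j' t) j' ≤
            ∑ j' ∈ Finset.univ.erase j, a p j' * M := by
          refine Finset.sum_le_sum fun j' _ => mul_le_mul_of_nonneg_left ?_ (ha p j')
          have := hD p j' _ htK
          exact hM _ (by omega) j'
        have := mul_le_mul_of_nonneg_left hj' hjp.le
        linarith
      rw [← Finset.sum_mul] at e1
      have e2 := mul_le_mul_of_nonneg_left (hM t (by omega) p) (hρ.le.trans (hρc p))
      have e3 : c p * M + (∑ j, a p j) * M = M := by rw [← add_mul, hsum, one_mul]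
      linarith
    have hlast := pers k M hk hM p (t + 1) (by omega) _ hfirst (k + r - (t + 1)) (by positivity)
    rw [show t + 1 + (k + r - (t + 1)) = k + r by omega] at hlast
    refine hlast.trans ?_
    have hp : ρ ^ r ≤ ρ ^ (k + r - (t + 1)) * ρ ^ (t - k) := by
      rw [← pow_add]; exact pow_le_pow_of_le_one hρ.le hρ1 (by omega)
    have : 0 ≤ a p j * C * (M - u k i0) := by positivity
    have := mul_le_mul_of_nonneg_left hp this
    linarith

theorem aux_conv {ι : Type*} [Fintype ι] [Nonempty ι] (u : ℕ → ι → ℝ) (hu : ∀ k i, 0 ≤ u k i)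
    (K : ι → Set ℕ)
    (s : ι → ι → ℕ → ℕ) (c : ι → ℝ) (a : ι → ι → ℝ) (hc : ∀ i, 0 < c i) (ha : ∀ i j, 0 ≤ a i j)
    (hsum : ∀ i, c i + ∑ j, a i j = 1)
    (hsle : ∀ i j, ∀ k ∈ K i, s i j k ≤ k)
    (hup : ∀ i, ∀ k ∈ K i, u (k + 1) i ≤ c i * u k i + ∑ j, a i j * u (s i j k) j)
    (hno : ∀ i, ∀ k, k ∉ K i → u (k + 1) i = u k i)
    (B D : ℕ) (hB : ∀ i, ∀ k : ℕ, ∃ l ∈ K i, k ≤ l ∧ l ≤ k + B)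
    (hD : ∀ i j, ∀ k ∈ K i, k - D ≤ s i j k)
    (hconn : ∀ i j, Relation.ReflTransGen (fun i j => 0 < a j i) i j) :
    ∃ V : ℝ, ∀ i, Filter.Tendsto (fun k => u k i) Filter.atTop (nhds V) := by
  obtain ⟨i1, hi1⟩ := Finite.exists_min c
  have hc1 : ∀ i, c i ≤ 1 := fun i => by
    have := Finset.sum_nonneg (fun j (_ : j ∈ Finset.univ) => ha i j)
    linarith [hsum i]
  have spread := fun i0 j => aux_spread u K s c a ha hsum hsle hup hno B D hB hD (c i1) (hc i1)
    (hc1 i1) hi1 i0 j (hconn i0 j)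
  have window := aux_window u K s c a hc ha hsum hsle hup hno D hD
  choose C hC N hN using spread
  set S : Set ℝ := {M | ∃ k, ∀ l, k ≤ l → ∀ i, u l i ≤ M} with hS
  have hSne : S.Nonempty := by
    refine ⟨∑ l ∈ Finset.range (D + 1), ∑ i, u l i, 0, window 0 _ fun l _ hl i => ?_⟩
    calc u l i ≤ ∑ i, u l i := Finset.single_le_sum (f := fun i => u l i)
            (fun i _ => hu l i) (Finset.mem_univ i)
      _ ≤ _ := Finset.single_le_sum (f := fun l => ∑ i, u l i)
            (fun l _ => Finset.sum_nonneg fun i _ => hu l i) (Finset.mem_range.2 (by omega))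
  have hSbdd : BddBelow S := by
    refine ⟨0, ?_⟩
    rintro M ⟨k, hk⟩
    exact (hu k i1).trans (hk k le_rfl i1)
  refine ⟨sInf S, fun i0 => ?_⟩
  obtain ⟨j1, hj1⟩ := Finite.exists_min (C i0)
  obtain ⟨j2, hj2⟩ := Finite.exists_max (N i0)
  set R := N i0 j2
  set κ := C i0 j1 * c i1 ^ (R + D) with hκ
  have hκpos : 0 < κ := mul_pos (hC _ _) (pow_pos (hc i1) _)
  -- key estimate
  have key : ∀ ε, 0 < ε → ∃ k0, ∀ k, k0 ≤ k → u k i0 ≤ sInf S + ε ∧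
      κ * (sInf S + ε - u k i0) ≤ ε := by
    intro ε hε
    obtain ⟨M, ⟨k0, hk0⟩, hM⟩ := exists_lt_of_csInf_lt hSne (lt_add_of_pos_right (sInf S) hε)
    have hb : ∀ l, k0 ≤ l → ∀ i, u l i ≤ sInf S + ε := fun l hl i => (hk0 l hl i).trans hM.le
    refine ⟨k0 + D, fun k hk => ⟨hb k (by omega) i0, ?_⟩⟩
    have hgap : 0 ≤ sInf S + ε - u k i0 := by linarith [hb k (by omega) i0]
    have : sInf S ≤ sInf S + ε - κ * (sInf S + ε - u k i0) := by
      refine csInf_le hSbdd ⟨k + R, window _ _ fun l hl1 hl2 j => ?_⟩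
      have := hN i0 j k (sInf S + ε) (by omega) (fun l hl i => hb l (by omega) i) (l - k)
        (by have := hj2 j; omega)
      rw [show k + (l - k) = l by omega] at this
      have hp : κ ≤ C i0 j * c i1 ^ (l - k) :=
        mul_le_mul (hj1 j) (pow_le_pow_of_le_one (hc i1).le (hc1 i1) (by omega))
          (pow_nonneg (hc i1).le _) (hC _ _).le
      have := mul_le_mul_of_nonneg_right hp hgap
      linarith
    linarith
  rw [Metric.tendsto_atTop]
  intro ε hε
  obtain ⟨k0, hk0⟩ := key (min (ε / 2) (κ * ε / 2)) (by positivity)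
  refine ⟨k0, fun k hk => ?_⟩
  obtain ⟨h1, h2⟩ := hk0 k hk
  have h3 := min_le_left (ε / 2) (κ * ε / 2)
  have h4 := min_le_right (ε / 2) (κ * ε / 2)
  have h5 : 0 < min (ε / 2) (κ * ε / 2) := by positivity
  rw [Real.dist_eq, abs_lt]
  refine ⟨?_, by linarith⟩
  have h6 : κ * (sInf S + min (ε / 2) (κ * ε / 2) - u k i0) ≤ κ * (ε / 2) := by linarith
  have := le_of_mul_le_mul_left h6 hκpos
  linarith

theorem aux_shift {E : Type*} [PseudoMetricSpace E] (X : ℕ → E)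
    (hX : Filter.Tendsto (fun k => dist (X (k + 1)) (X k)) Filter.atTop (nhds 0))
    (ψ τ : ℕ → ℕ) (hψ : Filter.Tendsto ψ Filter.atTop Filter.atTop) (N : ℕ)
    (h1 : ∀ k, ψ k ≤ τ k + N) (h2 : ∀ k, τ k ≤ ψ k + N) (y : E)
    (hy : Filter.Tendsto (fun k => X (ψ k)) Filter.atTop (nhds y)) :
    Filter.Tendsto (fun k => X (τ k)) Filter.atTop (nhds y) := by
  have hstep : ∀ ε, 0 < ε → ∃ k0, ∀ k, k0 ≤ k → ∀ r, dist (X (k + r)) (X k) ≤ r * ε := by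
    intro ε hε
    obtain ⟨k0, hk0⟩ := Metric.tendsto_atTop.1 hX ε hε
    refine ⟨k0, fun k hk r => ?_⟩
    induction r with
    | zero => simp
    | succ r ih =>
      have h := hk0 (k + r) (by omega)
      rw [Real.dist_eq, sub_zero, abs_of_nonneg dist_nonneg] at h
      have := dist_triangle (X (k + (r + 1))) (X (k + r)) (X k)
      rw [← add_assoc] at this ⊢
      push_cast
      linarith
  rw [tendsto_iff_dist_tendsto_zero] at hy ⊢
  have hd : Filter.Tendsto (fun k => dist (X (τ k)) (X (ψ k))) Filter.atTop (nhds 0) := by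
    rw [Metric.tendsto_atTop]
    intro ε hε
    have hNpos : (0 : ℝ) < N + 1 := by positivity
    obtain ⟨k0, hk0⟩ := hstep (ε / (N + 1)) (by positivity)
    obtain ⟨k1, hk1⟩ := Filter.eventually_atTop.1 (hψ.eventually_ge_atTop (k0 + N))
    refine ⟨k1, fun k hk => ?_⟩
    have hk' := hk1 k hk
    have a1 := h1 k
    have a2 := h2 k
    have hlt : (N : ℝ) * (ε / (N + 1)) < ε := by
      rw [mul_div_assoc', div_lt_iff₀ hNpos]; nlinarith
    rw [Real.dist_eq, sub_zero, abs_of_nonneg dist_nonneg]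
    refine lt_of_le_of_lt ?_ hlt
    rcases le_total (τ k) (ψ k) with h | h
    · have := hk0 (τ k) (by omega) (ψ k - τ k)
      rw [show τ k + (ψ k - τ k) = ψ k by omega, dist_comm] at this
      refine this.trans (mul_le_mul_of_nonneg_right ?_ (by positivity))
      exact_mod_cast (by omega : ψ k - τ k ≤ N)
    · have := hk0 (ψ k) (by omega) (τ k - ψ k)
      rw [show ψ k + (τ k - ψ k) = τ k by omega] at this
      refine this.trans (mul_le_mul_of_nonneg_right ?_ (by positivity))
      exact_mod_cast (by omega : τ k - ψ k ≤ N)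
  refine squeeze_zero (fun _ => dist_nonneg) (fun k => dist_triangle _ (X (ψ k)) _) ?_
  simpa using hd.add hy

theorem aux_prox {E : Type*} [NormedAddCommGroup E] [InnerProductSpace ℝ E] (G : E → ℝ)
    (hG : ConvexOn ℝ Set.univ G) (r : ℝ) (x p : E)
    (hp : ∀ z, G p + r * ‖p - x‖ ^ 2 ≤ G z + r * ‖z - x‖ ^ 2) (z : E) :
    G p + r * ‖p - x‖ ^ 2 + r * ‖z - p‖ ^ 2 ≤ G z + r * ‖z - x‖ ^ 2 := by
  have := aux_limit0 (G z + r * ‖z - x‖ ^ 2 - (G p + r * ‖p - x‖ ^ 2 + r * ‖z - p‖ ^ 2))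
    (r * ‖z - p‖ ^ 2) ?_
  · linarith
  intro t ht ht1
  have h1 := hp ((1 - t) • p + t • z)
  have h2 := hG.2 (Set.mem_univ p) (Set.mem_univ z) (sub_nonneg.2 ht1) ht.le (by ring)
  have h3 : ‖(1 - t) • p + t • z - x‖ ^ 2 =
      ‖p - x‖ ^ 2 + t * (‖z - x‖ ^ 2 - ‖p - x‖ ^ 2 - ‖z - p‖ ^ 2) + t ^ 2 * ‖z - p‖ ^ 2 := by
    have e1 : (1 - t) • p + t • z - x = (p - x) + t • (z - p) := by module
    have e2 : z - x = (p - x) + (z - p) := by abel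
    rw [e1, e2, norm_add_sq_real, norm_add_sq_real (p - x) (z - p), norm_smul, inner_smul_right,
      mul_pow, Real.norm_eq_abs, sq_abs]
    ring
  rw [h3] at h1
  simp only [smul_eq_mul] at h2
  have h4 : 0 ≤ t * (G z + r * ‖z - x‖ ^ 2 - (G p + r * ‖p - x‖ ^ 2 + r * ‖z - p‖ ^ 2)
      + t * (r * ‖z - p‖ ^ 2)) := by linarith
  exact nonneg_of_mul_nonneg_right h4 ht

theorem aux_quad {ι E : Type*} [Fintype ι] [NormedAddCommGroup E] [InnerProductSpace ℝ E]
    (W : ι → ι → ℝ) (hW : ∀ i j, W i j = W j i) (y d : ι → E) (t : ℝ) :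
    ∑ i, ∑ j, W i j * ‖(y i + t • d i) - (y j + t • d j)‖ ^ 2 =
      ∑ i, ∑ j, W i j * ‖y i - y j‖ ^ 2
      + t * (4 * ∑ i, ⟪∑ j, W i j • (y i - y j), d i⟫)
      + t ^ 2 * ∑ i, ∑ j, W i j * ‖d i - d j‖ ^ 2 := by
  have e1 : ∀ i j, W i j * ‖(y i + t • d i) - (y j + t • d j)‖ ^ 2 =
      W i j * ‖y i - y j‖ ^ 2 + t * (2 * (W i j * ⟪y i - y j, d i⟫ + W j i * ⟪y j - y i, d j⟫))
      + t ^ 2 * (W i j * ‖d i - d j‖ ^ 2) := by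
    intro i j
    have : (y i + t • d i) - (y j + t • d j) = (y i - y j) + t • (d i - d j) := by module
    rw [this, norm_add_sq_real, norm_smul, inner_smul_right, mul_pow, Real.norm_eq_abs, sq_abs,
      inner_sub_right, hW j i, ← neg_sub (y i) (y j), inner_neg_left]
    ring
  simp only [e1, Finset.sum_add_distrib, ← Finset.mul_sum]
  rw [Finset.sum_comm (f := fun i j => W j i * ⟪y j - y i, d j⟫)]
  simp only [sum_inner, inner_smul_left, RCLike.conj_to_real]
  ring

theorem aux_opt {ι E : Type*} [Fintype ι] [DecidableEq ι]
    [NormedAddCommGroup E] [InnerProductSpace ℝ E]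
    (W : ι → ι → ℝ) (hW : ∀ i j, W i j = W j i) (hW0 : ∀ i j, 0 ≤ W i j)
    (φ : ι → E → ℝ) (hφ : ∀ i, ConvexOn ℝ Set.univ (φ i)) (α : ℝ) (hα : 0 < α) (y : ι → E) :
    (∀ z : ι → E, (∑ i, φ i (y i)) + (1 / (4 * α)) * ∑ i, ∑ j, W i j * ‖y i - y j‖ ^ 2 ≤
      (∑ i, φ i (z i)) + (1 / (4 * α)) * ∑ i, ∑ j, W i j * ‖z i - z j‖ ^ 2) ↔
    ∀ i z, φ i (y i) ≤ φ i z + (1 / α) * ⟪∑ j, W i j • (y i - y j), z - y i⟫ := by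
  constructor
  · intro h i z
    set d : ι → E := fun l => if l = i then z - y i else 0 with hd
    set q := ∑ i, ∑ j, W i j * ‖d i - d j‖ ^ 2
    have := aux_limit0 (φ i z + (1 / α) * ⟪∑ j, W i j • (y i - y j), z - y i⟫ - φ i (y i))
      (1 / (4 * α) * q) ?_
    · linarith
    intro t ht ht1
    have h1 := h (fun l => y l + t • d l)
    rw [aux_quad W hW y d t] at h1
    have h2 : ∑ l, ⟪∑ j, W l j • (y l - y j), d l⟫ = ⟪∑ j, W i j • (y i - y j), z - y i⟫ := by
      rw [Finset.sum_eq_single i]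
      · simp [hd]
      · intro l _ hl; simp [hd, hl]
      · simp
    have h3 : ∑ l, φ l (y l + t • d l) ≤ ∑ l, φ l (y l) + t * (φ i z - φ i (y i)) := by
      rw [← Finset.add_sum_erase _ _ (Finset.mem_univ i),
        ← Finset.add_sum_erase _ (fun l => φ l (y l)) (Finset.mem_univ i)]
      have e1 : ∑ l ∈ Finset.univ.erase i, φ l (y l + t • d l) =
          ∑ l ∈ Finset.univ.erase i, φ l (y l) := by
        refine Finset.sum_congr rfl fun l hl => ?_
        simp [hd, Finset.ne_of_mem_erase hl]
      have e2 := (hφ i).2 (Set.mem_univ (y i)) (Set.mem_univ z) (sub_nonneg.2 ht1) ht.le (by ring)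
      have e3 : (1 - t) • y i + t • z = y i + t • d i := by simp only [hd, if_true]; module
      rw [e3] at e2
      simp only [smul_eq_mul] at e2
      rw [e1]; linarith
    rw [h2] at h1
    have h4 : 0 ≤ t * (φ i z + (1 / α) * ⟪∑ j, W i j • (y i - y j), z - y i⟫ - φ i (y i)
      + t * (1 / (4 * α) * q)) := by
      have : (1 / (4 * α)) * (t * (4 * ⟪∑ j, W i j • (y i - y j), z - y i⟫)) =
        t * ((1 / α) * ⟪∑ j, W i j • (y i - y j), z - y i⟫) := by field_simp
      linarith
    exact nonneg_of_mul_nonneg_right h4 ht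
  · intro h z
    have h1 := aux_quad W hW y (fun i => z i - y i) 1
    simp only [one_smul, add_sub_cancel] at h1
    rw [h1]
    have h2 := Finset.sum_le_sum fun i (_ : i ∈ Finset.univ) => h i (z i)
    rw [Finset.sum_add_distrib, ← Finset.mul_sum] at h2
    have h3 : 0 ≤ ∑ i, ∑ j, W i j * ‖(z i - y i) - (z j - y j)‖ ^ 2 :=
      Finset.sum_nonneg fun i _ => Finset.sum_nonneg fun j _ => mul_nonneg (hW0 i j) (sq_nonneg _)
    have h4 : 0 ≤ (1 / (4 * α)) * ∑ i, ∑ j, W i j * ‖(z i - y i) - (z j - y j)‖ ^ 2 := by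
      positivity
    have : (1 / (4 * α)) * (1 * (4 * ∑ i, ⟪∑ j, W i j • (y i - y j), z i - y i⟫)) =
        ((1 / α) * ∑ i, ⟪∑ j, W i j • (y i - y j), z i - y i⟫) := by field_simp
    linarith

theorem aux_step {ι E : Type*} [Fintype ι] [NormedAddCommGroup E] [InnerProductSpace ℝ E]
    (A : ι → ℝ) (hA : ∀ j, 0 ≤ A j) (α γ β : ℝ) (hα : 0 < α) (hγ : 0 < γ)
    (x p z : E) (v y : ι → E) (a b : ℝ)
    (hP : a + (1 / (2 * γ) - β / 2) * ‖p - x‖ ^ 2 + (1 / α) * ⟪∑ j, A j • (x - v j), p - z⟫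
      + 1 / (2 * γ) * ‖z - p‖ ^ 2 ≤ b + 1 / (2 * γ) * ‖z - x‖ ^ 2)
    (hO : b ≤ a + (1 / α) * ⟪∑ j, A j • (z - y j), p - z⟫) :
    ‖p - z‖ ^ 2 + (1 - γ * (β + (∑ j, A j) / α)) * ‖p - x‖ ^ 2 ≤
      (1 - γ * (∑ j, A j) / α) * ‖x - z‖ ^ 2 + ∑ j, γ / α * A j * ‖v j - y j‖ ^ 2 := by
  have h1 : ∀ j, 1 / 2 * (A j * (‖x - z‖ ^ 2 - ‖p - x‖ ^ 2)) - 1 / 2 * (A j * ‖v j - y j‖ ^ 2) ≤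
      A j * ⟪x - v j, p - z⟫ - A j * ⟪z - y j, p - z⟫ := by
    intro j
    have e1 : ⟪x - v j, p - z⟫ - ⟪z - y j, p - z⟫ = ⟪x - z, p - z⟫ - ⟪v j - y j, p - z⟫ := by
      rw [← inner_sub_left, ← inner_sub_left]; congr 1; abel
    have e2 : ‖p - x‖ ^ 2 = ‖p - z‖ ^ 2 - 2 * ⟪x - z, p - z⟫ + ‖x - z‖ ^ 2 := by
      rw [← real_inner_comm, ← norm_sub_sq_real]; congr 2; abel
    have e3 : 2 * ⟪v j - y j, p - z⟫ ≤ ‖v j - y j‖ ^ 2 + ‖p - z‖ ^ 2 := by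
      have := norm_sub_sq_real (v j - y j) (p - z)
      nlinarith [sq_nonneg ‖v j - y j - (p - z)‖]
    have e4 : 1 / 2 * (‖x - z‖ ^ 2 - ‖p - x‖ ^ 2) - 1 / 2 * ‖v j - y j‖ ^ 2 ≤
      ⟪x - v j, p - z⟫ - ⟪z - y j, p - z⟫ := by linarith
    have := mul_le_mul_of_nonneg_left e4 (hA j)
    linarith
  have h2 := Finset.sum_le_sum fun j (_ : j ∈ Finset.univ) => h1 j
  rw [Finset.sum_sub_distrib, Finset.sum_sub_distrib, ← Finset.mul_sum, ← Finset.sum_mul,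
    ← Finset.mul_sum] at h2
  simp only [sum_inner, inner_smul_left, RCLike.conj_to_real] at hP hO
  have h3 := mul_le_mul_of_nonneg_left h2 (one_div_pos.2 hα).le
  simp only [mul_assoc (γ / α), ← Finset.mul_sum]
  rw [norm_sub_rev z p, norm_sub_rev z x] at hP
  have h4 := (mul_le_mul_of_nonneg_left (add_le_add (add_le_add hP hO) h3)
    (by positivity : 0 ≤ 2 * γ))
  field_simp at h4 ⊢
  linarith

/-- Theorem 1, part 1 (convergence without strong convexity): under partial
asynchrony the joint iterate sequence of asynchronous DPBM converges to a
global minimizer of the penalized objective.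
The `n + 1` nodes are indexed by `Fin (n + 1)` (so there is at least one node). -/
theorem stmt_7 {d n : ℕ} (hd : 1 ≤ d)
    -- averaging matrix
    (W : Matrix (Fin (n + 1)) (Fin (n + 1)) ℝ)
    (hWsymm : W.IsSymm)
    (hWnonneg : ∀ i j, 0 ≤ W i j)
    (hWrow : ∀ i, ∑ j, W i j = 1)
    (hWdiag : ∀ i, 0 < W i i)
    (hconn : (SimpleGraph.fromRel (fun i j : Fin (n + 1) => 0 < W i j)).Connected)
    -- local objective functions
    (f h : Fin (n + 1) → EuclideanSpace ℝ (Fin d) → ℝ)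
    (hfconv : ∀ i, ConvexOn ℝ Set.univ (f i))
    (hfdiff : ∀ i, Differentiable ℝ (f i))
    (hhconv : ∀ i, ConvexOn ℝ Set.univ (h i))
    -- penalized objective and its minimizer
    (α : ℝ) (hα : 0 < α)
    (Φ : (Fin (n + 1) → EuclideanSpace ℝ (Fin d)) → ℝ)
    (hΦ : ∀ x, Φ x = (∑ i, (f i (x i) + h i (x i)))
        + (1 / (4 * α)) * ∑ i, ∑ j, W i j * ‖x i - x j‖ ^ 2)
    (xstar : Fin (n + 1) → EuclideanSpace ℝ (Fin d))
    (hxstar : ∀ y, Φ xstar ≤ Φ y)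
    -- update times and delayed indices
    (K : Fin (n + 1) → Set ℕ)
    (s : Fin (n + 1) → Fin (n + 1) → ℕ → ℕ)
    (hsii : ∀ i, ∀ k ∈ K i, s i i k = k)
    (hsle : ∀ i j, ∀ k ∈ K i, s i j k ≤ k)
    -- iterates and models
    (x : ℕ → Fin (n + 1) → EuclideanSpace ℝ (Fin d))
    (β : Fin (n + 1) → ℝ) (hβ : ∀ i, 0 ≤ β i)
    (m : Fin (n + 1) → ℕ → EuclideanSpace ℝ (Fin d) → ℝ)
    (hmconv : ∀ i, ∀ k ∈ K i, ConvexOn ℝ Set.univ (m i k))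
    (hmle : ∀ i, ∀ k ∈ K i, ∀ y, m i k y ≤ f i y)
    (hmge : ∀ i, ∀ k ∈ K i, ∀ y, f i y ≤ m i k y + β i / 2 * ‖y - x k i‖ ^ 2)
    -- step-sizes
    (γ : Fin (n + 1) → ℝ)
    (hγpos : ∀ i, 0 < γ i)
    (hγlt : ∀ i, γ i < 1 / (β i + (1 - W i i) / α))
    -- the algorithm update
    (hupdate : ∀ i, ∀ k ∈ K i, ∀ z,
      m i k (x (k + 1) i) + h i (x (k + 1) i)
          + ‖x (k + 1) i - x k i‖ ^ 2 / (2 * γ i)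
          + (1 / α) * ⟪∑ j, W i j • (x k i - x (s i j k) j), x (k + 1) i⟫
        ≤ m i k z + h i z + ‖z - x k i‖ ^ 2 / (2 * γ i)
          + (1 / α) * ⟪∑ j, W i j • (x k i - x (s i j k) j), z⟫)
    (hnoupdate : ∀ i, ∀ k, k ∉ K i → x (k + 1) i = x k i)
    -- partial asynchrony
    (B D : ℕ)
    (hB : ∀ i, ∀ k : ℕ, ∃ l ∈ K i, k ≤ l ∧ l ≤ k + B)
    (hD : ∀ i j, ∀ k ∈ K i, k - D ≤ s i j k) :
    ∃ xt : Fin (n + 1) → EuclideanSpace ℝ (Fin d),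
      Filter.Tendsto x Filter.atTop (nhds xt) ∧ ∀ y, Φ xt ≤ Φ y := by
  classical
  set φ : Fin (n + 1) → EuclideanSpace ℝ (Fin d) → ℝ := fun i z => f i z + h i z with hφdef
  have hφ : ∀ i, ConvexOn ℝ Set.univ (φ i) := fun i => (hfconv i).add (hhconv i)
  have hφcont : ∀ i, Continuous (φ i) := fun i =>
    continuousOn_univ.1 ((hφ i).continuousOn isOpen_univ)
  have hWs : ∀ i j, W i j = W j i := fun i j => (hWsymm.apply i j).symm
  -- optimality characterization
  have hopt : ∀ y, (∀ z, Φ y ≤ Φ z) ↔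
      ∀ i z, φ i (y i) ≤ φ i z + (1 / α) * ⟪∑ j, W i j • (y i - y j), z - y i⟫ := by
    intro y
    rw [← aux_opt W hWs hWnonneg φ hφ α hα y]
    simp only [hΦ, hφdef]
  -- proximal inequality
  have hP : ∀ i, ∀ k ∈ K i, ∀ z, φ i (x (k + 1) i)
      + (1 / (2 * γ i) - β i / 2) * ‖x (k + 1) i - x k i‖ ^ 2
      + (1 / α) * ⟪∑ j, W i j • (x k i - x (s i j k) j), x (k + 1) i - z⟫
      + 1 / (2 * γ i) * ‖z - x (k + 1) i‖ ^ 2 ≤ φ i z + 1 / (2 * γ i) * ‖z - x k i‖ ^ 2 := by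
    intro i k hk z
    set g := ∑ j, W i j • (x k i - x (s i j k) j) with hg
    have hlin : ConvexOn ℝ Set.univ (fun z : EuclideanSpace ℝ (Fin d) => (1 / α) * ⟪g, z⟫) := by
      refine ⟨convex_univ, fun a _ b _ p q _ _ _ => le_of_eq ?_⟩
      simp only [inner_add_right, inner_smul_right, smul_eq_mul]
      ring
    have h1 := aux_prox (fun z => m i k z + h i z + (1 / α) * ⟪g, z⟫)
      (((hmconv i k hk).add (hhconv i)).add hlin) (1 / (2 * γ i)) (x k i) (x (k + 1) i)
      (fun z => by
        have := hupdate i k hk z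
        rw [← hg] at this
        rw [div_eq_mul_one_div (‖x (k + 1) i - x k i‖ ^ 2), div_eq_mul_one_div (‖z - x k i‖ ^ 2)]
          at this
        linarith) z
    have h2 := hmle i k hk z
    have h3 := hmge i k hk (x (k + 1) i)
    simp only [hφdef, inner_sub_right]
    linarith
  -- weights
  set A : Fin (n + 1) → Fin (n + 1) → ℝ := fun i j => if j = i then 0 else W i j with hA
  have hA0 : ∀ i j, 0 ≤ A i j := fun i j => by
    simp only [hA]; split_ifs <;> simp [hWnonneg]
  have hAsum : ∀ i, ∑ j, A i j = 1 - W i i := fun i => by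
    rw [← hWrow i, ← Finset.add_sum_erase _ _ (Finset.mem_univ i),
      ← Finset.add_sum_erase _ (fun j => W i j) (Finset.mem_univ i)]
    have : ∑ j ∈ Finset.univ.erase i, A i j = ∑ j ∈ Finset.univ.erase i, W i j :=
      Finset.sum_congr rfl fun j hj => by simp [hA, Finset.ne_of_mem_erase hj]
    rw [this]; simp [hA]
  have hAW : ∀ i (v : Fin (n + 1) → EuclideanSpace ℝ (Fin d)), v i = 0 → ∑ j, W i j • v j = ∑ j, A i j • v j := by
    intro i v hv
    refine Finset.sum_congr rfl fun j _ => ?_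
    by_cases hj : j = i
    · subst hj; simp [hv]
    · simp [hA, hj]
  have hδ : ∀ i, 0 < 1 - γ i * (β i + (∑ j, A i j) / α) := by
    intro i
    rw [hAsum]
    have h1 : 0 < 1 / (β i + (1 - W i i) / α) := (hγpos i).trans (hγlt i)
    have h2 : 0 < β i + (1 - W i i) / α := one_div_pos.1 h1
    have := (lt_div_iff₀ h2).1 (hγlt i)
    linarith
  -- main inequality
  have hmain : ∀ y, (∀ z, Φ y ≤ Φ z) → ∀ i, ∀ k ∈ K i,
      ‖x (k + 1) i - y i‖ ^ 2
        + (1 - γ i * (β i + (∑ j, A i j) / α)) * ‖x (k + 1) i - x k i‖ ^ 2 ≤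
      (1 - γ i * (∑ j, A i j) / α) * ‖x k i - y i‖ ^ 2
        + ∑ j, γ i / α * A i j * ‖x (s i j k) j - y j‖ ^ 2 := by
    intro y hy i k hk
    have h1 := hP i k hk (y i)
    have h2 := (hopt y).1 hy i (x (k + 1) i)
    rw [hAW i (fun j => x k i - x (s i j k) j) (by simp [hsii i k hk])] at h1
    rw [hAW i (fun j => y i - y j) (by simp)] at h2
    exact aux_step (A i) (hA0 i) α (γ i) (β i) hα (hγpos i) (x k i) (x (k + 1) i) (y i)
      (fun j => x (s i j k) j) y _ _ h1 h2
  have hconn' : ∀ i j, Relation.ReflTransGen (fun i j => 0 < γ j / α * A j i) i j := by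
    intro i j
    have := (SimpleGraph.reachable_iff_reflTransGen i j).1 (hconn.preconnected i j)
    refine Relation.ReflTransGen.mono ?_ _ _ this
    intro p q hpq
    rw [SimpleGraph.fromRel_adj] at hpq
    obtain ⟨hne, hor⟩ := hpq
    have hpos : 0 < W q p := by
      rcases hor with h | h
      · rw [hWs]; exact h
      · exact h
    have := hγpos q
    simp only [hA, if_neg hne]
    positivity
  have hc : ∀ i, 0 < 1 - γ i * (∑ j, A i j) / α := by
    intro i
    have := hδ i
    have h2 := mul_nonneg (hγpos i).le (hβ i)
    rw [mul_add, ← mul_div_assoc] at this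
    linarith
  -- convergence of distances to any minimizer
  have hdist : ∀ y, (∀ z, Φ y ≤ Φ z) →
      ∃ V : ℝ, ∀ i, Filter.Tendsto (fun k => ‖x k i - y i‖ ^ 2) Filter.atTop (nhds V) := by
    intro y hy
    refine aux_conv (fun k i => ‖x k i - y i‖ ^ 2) (fun k i => sq_nonneg _) K s
      (fun i => 1 - γ i * (∑ j, A i j) / α) (fun i j => γ i / α * A i j) hc
      (fun i j => mul_nonneg (div_pos (hγpos i) hα).le (hA0 i j)) ?_ hsle ?_ ?_ B D hB hD hconn'
    · intro i
      rw [← Finset.mul_sum]; ring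
    · intro i k hk
      have h1 := hmain y hy i k hk
      have h2 := mul_nonneg (hδ i).le (sq_nonneg ‖x (k + 1) i - x k i‖)
      linarith
    · intro i k hk
      simp only [hnoupdate i k hk]
  obtain ⟨V, hV⟩ := hdist xstar hxstar
  -- successive differences vanish
  have hdiff : ∀ i, Filter.Tendsto (fun k => dist (x (k + 1) i) (x k i)) Filter.atTop (nhds 0) := by
    intro i
    have hs : ∀ j, Filter.Tendsto (fun k => if k ∈ K i then ‖x (s i j k) j - xstar j‖ ^ 2 else V)
        Filter.atTop (nhds V) := by
      intro j
      have hidx : Filter.Tendsto (fun k => if k ∈ K i then s i j k else k)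
          Filter.atTop Filter.atTop := by
        refine Filter.tendsto_atTop_mono (f := fun k => k - D) ?_ (Filter.tendsto_sub_atTop_nat D)
        intro k
        split_ifs with hk
        · exact hD i j k hk
        · omega
      have h1 := (hV j).comp hidx
      rw [Metric.tendsto_atTop] at h1 ⊢
      intro ε hε
      obtain ⟨N, hN⟩ := h1 ε hε
      refine ⟨N, fun k hk => ?_⟩
      have := hN k hk
      by_cases hK : k ∈ K i
      · simpa [hK] using this
      · simpa [hK] using hε
    have hlim : Filter.Tendsto (fun k => (1 - γ i * (∑ j, A i j) / α) * ‖x k i - xstar i‖ ^ 2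
        + ∑ j, γ i / α * A i j * (if k ∈ K i then ‖x (s i j k) j - xstar j‖ ^ 2 else V)
        - ‖x (k + 1) i - xstar i‖ ^ 2) Filter.atTop (nhds 0) := by
      have h1 := (((hV i).const_mul (1 - γ i * (∑ j, A i j) / α)).add
        (tendsto_finsetSum Finset.univ fun j _ => (hs j).const_mul (γ i / α * A i j))).sub
        ((hV i).comp (Filter.tendsto_add_atTop_nat 1))
      have h2 : (1 - γ i * (∑ j, A i j) / α) * V + ∑ j, γ i / α * A i j * V - V = 0 := by
        rw [← Finset.sum_mul, ← Finset.mul_sum]; ring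
      rw [h2] at h1
      exact h1
    have hsq : Filter.Tendsto (fun k => dist (x (k + 1) i) (x k i) ^ 2) Filter.atTop (nhds 0) := by
      have h2 := (hlim.abs).const_mul (1 / (1 - γ i * (β i + (∑ j, A i j) / α)))
      rw [abs_zero, mul_zero] at h2
      refine squeeze_zero (fun _ => sq_nonneg _) (fun k => ?_) h2
      rw [one_div, ← div_eq_inv_mul, le_div_iff₀ (hδ i), dist_eq_norm]
      by_cases hk : k ∈ K i
      · have := hmain xstar hxstar i k hk
        simp only [if_pos hk]
        refine le_trans ?_ (le_abs_self _)
        linarith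
      · rw [hnoupdate i k hk]; simp
    have := hsq.sqrt
    simpa using this
  -- boundedness and a limit point
  have hbdd : Bornology.IsBounded (Set.range x) := by
    rw [← Bornology.forall_isBounded_image_eval_iff]
    intro i
    obtain ⟨R, hR⟩ := (hV i).bddAbove_range
    refine (Metric.isBounded_closedBall (x := xstar i) (r := Real.sqrt R)).subset ?_
    rintro _ ⟨_, ⟨k, rfl⟩, rfl⟩
    rw [Metric.mem_closedBall, dist_eq_norm]
    exact Real.le_sqrt_of_sq_le (hR ⟨k, rfl⟩)
  obtain ⟨xt, -, ψ, hψ, hlim⟩ := tendsto_subseq_of_bounded hbdd (fun k => Set.mem_range_self k)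
  have hlim' : ∀ i, Filter.Tendsto (fun k => x (ψ k) i) Filter.atTop (nhds (xt i)) :=
    fun i => (tendsto_pi_nhds.1 hlim) i
  have hshift : ∀ i (τ : ℕ → ℕ) (N : ℕ), (∀ k, ψ k ≤ τ k + N) → (∀ k, τ k ≤ ψ k + N) →
      Filter.Tendsto (fun k => x (τ k) i) Filter.atTop (nhds (xt i)) := fun i τ N h1 h2 =>
    aux_shift (fun k => x k i) (hdiff i) ψ τ hψ.tendsto_atTop N h1 h2 (xt i) (hlim' i)
  -- the limit point is a minimizer
  have hmin : ∀ z, Φ xt ≤ Φ z := by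
    rw [hopt]
    intro i z
    choose τ hτK hτ1 hτ2 using fun k => hB i (ψ k)
    have l1 := hshift i τ B (fun k => by have := hτ1 k; omega) hτ2
    have l2 := hshift i (fun k => τ k + 1) (B + 1) (fun k => by have := hτ1 k; omega)
      (fun k => by have := hτ2 k; omega)
    have l3 := fun j => hshift j (fun k => s i j (τ k)) (B + D)
      (fun k => by have := hτ1 k; have := hD i j _ (hτK k); omega)
      (fun k => by have := hτ2 k; have := hsle i j _ (hτK k); omega)
    have l4 : Filter.Tendsto (fun k => ∑ j, W i j • (x (τ k) i - x (s i j (τ k)) j)) Filter.atTop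
        (nhds (∑ j, W i j • (xt i - xt j))) :=
      tendsto_finsetSum _ fun j _ => (l1.sub (l3 j)).const_smul (W i j)
    have L := ((((hφcont i).tendsto (xt i)).comp l2).add
      (((l2.sub l1).norm.pow 2).const_mul (1 / (2 * γ i) - β i / 2))).add
      ((l4.inner (𝕜 := ℝ) (l2.sub_const z)).const_mul (1 / α)) |>.add
      (((l2.const_sub z).norm.pow 2).const_mul (1 / (2 * γ i)))
    have Rr := (((l1.const_sub z).norm.pow 2).const_mul (1 / (2 * γ i))).const_add (φ i z)
    have := le_of_tendsto_of_tendsto' L Rr (fun k => hP i (τ k) (hτK k) z)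
    rw [← neg_sub z (xt i), inner_neg_right] at this
    simp at this
    simp only [one_div]
    linarith
  refine ⟨xt, ?_, hmin⟩
  obtain ⟨V', hV'⟩ := hdist xt hmin
  rw [tendsto_pi_nhds]
  intro i
  have h0 : Filter.Tendsto (fun k => ‖x (ψ k) i - xt i‖ ^ 2) Filter.atTop (nhds 0) := by
    simpa using ((hlim' i).sub_const (xt i)).norm.pow 2
  have hV0 : V' = 0 := tendsto_nhds_unique ((hV' i).comp hψ.tendsto_atTop) h0
  have := (hV' i).sqrt
  rw [hV0] at this
  rw [tendsto_iff_norm_sub_tendsto_zero]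
  simpa using this
end
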